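/- arXiv:1506.07420 — 2 statements merged into one kernel-verified Lean document; each statement's English description precedes it below -/
import Mathlib

section
/- The modified Fermi Golden Rule holds: with H(x) = tanh(x/√2), Y₁(x) = 2^(-3/4)·√3·tanh(x/√2)·sech(x/√2), f(x) = (3/2)·( H(x)·Y₁(x)² - (∫_ℝ H(y)·Y₁(y)³ dy)·Y₁(x) ), and k(x) = e^(2ix)·( 1 + (1/2)·sech²(x/√2) + i·√2·tanh(x/√2) ), one has ∫_ℝ Im(k(x))·f(x)·sech²(x/(8√2)) dx ≠ 0. -/
open MeasureTheory

noncomputable def sech (x : ℝ) : ℝ := 1 / Real.cosh x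

noncomputable def Hkink (x : ℝ) : ℝ := Real.tanh (x / Real.sqrt 2)

noncomputable def Y1 (x : ℝ) : ℝ :=
  (2 : ℝ) ^ (-(3 : ℝ) / 4) * Real.sqrt 3 * Real.tanh (x / Real.sqrt 2) * sech (x / Real.sqrt 2)

noncomputable def fsrc (x : ℝ) : ℝ :=
  (3 / 2) * (Hkink x * (Y1 x) ^ 2 - (∫ y : ℝ, Hkink y * (Y1 y) ^ 3) * Y1 x)

noncomputable def kJost (x : ℝ) : ℂ :=
  Complex.exp (2 * Complex.I * (x : ℂ)) *
    (1 + ((1 / 2 * sech (x / Real.sqrt 2) ^ 2 : ℝ) : ℂ)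
      + Complex.I * (Real.sqrt 2 : ℂ) * ((Real.tanh (x / Real.sqrt 2) : ℝ) : ℂ))

open Filter Topology

lemma fg_absexp (n : ℕ) : Integrable (fun t : ℝ => |t| ^ n * Real.exp (-|t|)) ∧
    ∫ t : ℝ, |t| ^ n * Real.exp (-|t|) = 2 * (n.factorial : ℝ) := by
  have h1 : ∫ t : ℝ, |t| ^ n * Real.exp (-|t|) = 2 * (n.factorial : ℝ) := by
    rw [integral_comp_abs (f := fun t => t ^ n * Real.exp (-t))]
    rw [← Real.Gamma_nat_eq_factorial, Real.Gamma_eq_integral (by positivity)]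
    congr 1
    refine setIntegral_congr_fun measurableSet_Ioi fun x hx => ?_
    simp only [add_sub_cancel_right, Real.rpow_natCast]
    ring
  refine ⟨?_, h1⟩
  by_contra h
  rw [integral_undef h] at h1
  have := n.factorial_pos
  have : (0:ℝ) < n.factorial := by exact_mod_cast this
  linarith

lemma sech_pos (t : ℝ) : 0 < sech t := by
  unfold sech; have := Real.cosh_pos t; positivity

lemma sech_le_one (t : ℝ) : sech t ≤ 1 := by
  unfold sech
  rw [div_le_one (Real.cosh_pos t)]
  exact Real.one_le_cosh t

lemma sech_sq (t : ℝ) : Real.tanh t ^ 2 = 1 - sech t ^ 2 := by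
  unfold sech
  rw [Real.tanh_eq_sinh_div_cosh]
  have := Real.cosh_pos t
  have h := Real.cosh_sq t
  field_simp
  linarith

lemma sech_le_exp (t : ℝ) : sech t ≤ 2 * Real.exp (-|t|) := by
  unfold sech
  rw [← Real.cosh_abs, div_le_iff₀ (Real.cosh_pos _), Real.cosh_eq, Real.exp_neg]
  have := Real.exp_pos |t|
  field_simp
  nlinarith [sq_nonneg (Real.exp |t|)]

lemma sech_hasDeriv (t : ℝ) : HasDerivAt sech (-(sech t * Real.tanh t)) t := by
  have h := ((hasDerivAt_const t (1:ℝ)).div (Real.hasDerivAt_cosh t) (Real.cosh_pos t).ne')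
  refine h.congr_deriv ?_
  unfold sech
  rw [Real.tanh_eq_sinh_div_cosh]
  have := Real.cosh_pos t
  field_simp
  simp

lemma tanh_hasDeriv (t : ℝ) : HasDerivAt Real.tanh (sech t ^ 2) t := by
  have h := ((Real.hasDerivAt_sinh t).div (Real.hasDerivAt_cosh t) (Real.cosh_pos t).ne')
  have e : Real.tanh = Real.sinh / Real.cosh := by
    ext x; simp [Real.tanh_eq_sinh_div_cosh]
  rw [e]
  refine h.congr_deriv ?_
  unfold sech
  have h2 := Real.cosh_sq t
  have := Real.cosh_pos t
  field_simp
  linarith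

@[fun_prop]
lemma sech_cont : Continuous sech :=
  continuous_iff_continuousAt.2 fun t => (sech_hasDeriv t).continuousAt

@[fun_prop]
lemma tanh_cont : Continuous Real.tanh :=
  continuous_iff_continuousAt.2 fun t => (tanh_hasDeriv t).continuousAt

lemma fg_integrable {F : ℝ → ℝ} (hF : Continuous F) (C : ℝ) (h : ∀ t, |F t| ≤ C * sech t) :
    Integrable F := by
  have hC : 0 ≤ C := by
    have := (abs_nonneg _).trans (h 0)
    exact nonneg_of_mul_nonneg_left this (sech_pos 0)
  refine Integrable.mono' (((fg_absexp 0).1).const_mul (C * 2)) hF.aestronglyMeasurable ?_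
  refine Eventually.of_forall fun t => ?_
  rw [Real.norm_eq_abs]
  refine (h t).trans ?_
  have := mul_le_mul_of_nonneg_left (sech_le_exp t) hC
  simpa [mul_assoc] using this

lemma exp_neg_abs_tendsto_top : Tendsto (fun t : ℝ => Real.exp (-|t|)) atTop (𝓝 0) :=
  Real.tendsto_exp_neg_atTop_nhds_zero.comp tendsto_abs_atTop_atTop

lemma exp_neg_abs_tendsto_bot : Tendsto (fun t : ℝ => Real.exp (-|t|)) atBot (𝓝 0) :=
  Real.tendsto_exp_neg_atTop_nhds_zero.comp tendsto_abs_atBot_atTop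

lemma sech_tendsto_top : Tendsto sech atTop (𝓝 0) :=
  squeeze_zero (fun t => (sech_pos t).le) sech_le_exp
    (by simpa using exp_neg_abs_tendsto_top.const_mul 2)

lemma sech_tendsto_bot : Tendsto sech atBot (𝓝 0) :=
  squeeze_zero (fun t => (sech_pos t).le) sech_le_exp
    (by simpa using exp_neg_abs_tendsto_bot.const_mul 2)

lemma tanh_tendsto_top : Tendsto Real.tanh atTop (𝓝 1) := by
  have e : Real.tanh = fun t => 1 - Real.exp (-t) * sech t := by
    ext t
    rw [Real.tanh_eq_sinh_div_cosh]; unfold sech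
    have := Real.cosh_pos t
    field_simp
    rw [Real.sinh_eq, Real.cosh_eq]; ring
  rw [e]
  simpa using (Real.tendsto_exp_neg_atTop_nhds_zero.mul sech_tendsto_top).const_sub 1

lemma tanh_tendsto_bot : Tendsto Real.tanh atBot (𝓝 (-1)) := by
  have e : Real.tanh = fun t => -Real.tanh (-t) := by
    ext t; simp [Real.tanh_neg]
  rw [e]
  exact (tanh_tendsto_top.comp tendsto_neg_atBot_atTop).neg

lemma abs_tanh_le_abs (t : ℝ) : |Real.tanh t| ≤ |t| := by
  have := Convex.norm_image_sub_le_of_norm_hasDerivWithin_le (f := Real.tanh)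
    (f' := fun t => sech t ^ 2) (C := 1) (s := Set.univ) (x := 0) (y := t)
    (fun x _ => (tanh_hasDeriv x).hasDerivWithinAt)
    (fun x _ => by
      rw [Real.norm_eq_abs, abs_of_nonneg (sq_nonneg _)]
      have := sech_pos x; have := sech_le_one x
      nlinarith) convex_univ trivial trivial
  simpa using this

lemma fg_ftc {F f : ℝ → ℝ} (hd : ∀ t, HasDerivAt F (f t) t) (hf : Integrable f)
    (C : ℝ) (h : ∀ t, |F t| ≤ C * sech t) : ∫ t, f t = 0 := by
  have a : Tendsto F atTop (𝓝 0) :=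
    squeeze_zero_norm h (by simpa using sech_tendsto_top.const_mul C)
  have b : Tendsto F atBot (𝓝 0) :=
    squeeze_zero_norm h (by simpa using sech_tendsto_bot.const_mul C)
  simpa using integral_of_hasDerivAt_of_tendsto hd hf b a

lemma fg_int_TS : ∫ t, Real.tanh t ^ 2 * sech t ^ 2 = 2 / 3 := by
  have hd : ∀ t, HasDerivAt (fun t => Real.tanh t ^ 3 / 3) (Real.tanh t ^ 2 * sech t ^ 2) t := by
    intro t
    refine (((tanh_hasDeriv t).pow 3).div_const 3).congr_deriv ?_
    simp; ring
  have hi : Integrable (fun t => Real.tanh t ^ 2 * sech t ^ 2) := by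
    refine fg_integrable (by fun_prop) 1 fun t => ?_
    have := sech_pos t; have := sech_le_one t
    rw [abs_of_nonneg (by positivity)]
    have h1 := (Real.tanh_sq_lt_one t).le
    have h2 : sech t ^ 2 ≤ sech t := by nlinarith
    exact mul_le_mul h1 h2 (by positivity) (by norm_num)
  rw [integral_of_hasDerivAt_of_tendsto hd hi ((tanh_tendsto_bot.pow 3).div_const 3)
    ((tanh_tendsto_top.pow 3).div_const 3)]
  norm_num

/-- The Fourier transform of `sech ^ 2`, through the Beta function. -/
lemma fg_fourier (ω : ℝ) (hω : 0 < ω) :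
    ∫ t : ℝ, Complex.exp (Complex.I * ω * t) * ((sech t ^ 2 : ℝ) : ℂ)
      = ((Real.pi * ω / Real.sinh (Real.pi * ω / 2) : ℝ) : ℂ) := by
  set z : ℂ := Complex.I * ω / 2 with hz
  have hzne : z ≠ 0 := by simp [hz, hω.ne']
  have hzre : z.re = 0 := by simp [hz]
  -- change of variables
  have himg : (fun t : ℝ => (1 + Real.tanh t) / 2) '' Set.univ = Set.Ioo 0 1 := by
    ext x
    constructor
    · rintro ⟨t, -, rfl⟩
      have := Real.tanh_lt_one t; have := Real.neg_one_lt_tanh t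
      constructor <;> dsimp only <;> linarith
    · rintro ⟨h0, h1⟩
      refine ⟨Real.artanh (2 * x - 1), trivial, ?_⟩
      dsimp only
      rw [Real.tanh_artanh ⟨by linarith, by linarith⟩]
      ring
  have hcv := integral_image_eq_integral_abs_deriv_smul (s := Set.univ)
    (f := fun t : ℝ => (1 + Real.tanh t) / 2) (f' := fun t => sech t ^ 2 / 2) MeasurableSet.univ
    (fun t _ => (((tanh_hasDeriv t).const_add 1).div_const 2).hasDerivWithinAt)
    (fun a _ b _ h => Real.tanh_injective (by dsimp only at h; linarith))
    (fun x : ℝ => (x : ℂ) ^ z * (1 - (x : ℂ)) ^ (-z))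
  rw [himg, setIntegral_univ] at hcv
  have hpt : ∀ t : ℝ, |sech t ^ 2 / 2| • (fun x : ℝ => (x : ℂ) ^ z * (1 - (x : ℂ)) ^ (-z))
      ((1 + Real.tanh t) / 2) =
      (1 / 2 : ℂ) * (Complex.exp (Complex.I * ω * t) * ((sech t ^ 2 : ℝ) : ℂ)) := by
    intro t
    have hc := Real.cosh_pos t
    have hp : (1 + Real.tanh t) / 2 = Real.exp t * (sech t / 2) := by
      unfold sech; rw [Real.tanh_eq_sinh_div_cosh]; field_simp
      rw [← Real.cosh_add_sinh]
    have hq : 1 - (1 + Real.tanh t) / 2 = Real.exp (-t) * (sech t / 2) := by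
      unfold sech; rw [Real.tanh_eq_sinh_div_cosh, ← Real.cosh_sub_sinh]; field_simp
      ring
    have hs : 0 < sech t / 2 := by have := sech_pos t; positivity
    dsimp only
    rw [← Complex.ofReal_one, ← Complex.ofReal_sub, hq, hp, abs_of_nonneg (by positivity)]
    rw [Complex.ofReal_mul, Complex.ofReal_mul,
      Complex.mul_cpow_ofReal_nonneg (Real.exp_pos _).le hs.le,
      Complex.mul_cpow_ofReal_nonneg (Real.exp_pos _).le hs.le]
    have hs' : ((sech t / 2 : ℝ) : ℂ) ≠ 0 := by exact_mod_cast hs.ne'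
    have e1 : ((Real.exp t : ℝ) : ℂ) ^ z = Complex.exp (t * z) := by
      rw [Complex.cpow_def_of_ne_zero (by exact_mod_cast (Real.exp_pos _).ne'),
        ← Complex.ofReal_log (Real.exp_pos _).le, Real.log_exp]
    have e2 : ((Real.exp (-t) : ℝ) : ℂ) ^ (-z) = Complex.exp (t * z) := by
      rw [Complex.cpow_def_of_ne_zero (by exact_mod_cast (Real.exp_pos _).ne'),
        ← Complex.ofReal_log (Real.exp_pos _).le, Real.log_exp]
      push_cast; congr 1; ring
    rw [e1, e2, Complex.cpow_neg]
    have hne : ((sech t / 2 : ℝ) : ℂ) ^ z ≠ 0 := by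
      rw [Complex.cpow_def_of_ne_zero hs']; exact Complex.exp_ne_zero _
    have e3 : Complex.exp (Complex.I * ω * t) = Complex.exp (t * z) * Complex.exp (t * z) := by
      rw [← Complex.exp_add]; congr 1; rw [hz]; ring
    rw [e3, Complex.real_smul]
    push_cast at hne ⊢
    field_simp
  simp_rw [hpt] at hcv
  rw [integral_const_mul] at hcv
  have hbeta : Complex.betaIntegral (1 + z) (1 - z) =
      ∫ x : ℝ in Set.Ioo 0 1, (x : ℂ) ^ z * (1 - (x : ℂ)) ^ (-z) := by
    rw [Complex.betaIntegral, intervalIntegral.integral_of_le zero_le_one,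
      integral_Ioc_eq_integral_Ioo]
    simp
  have hG := Complex.Gamma_mul_Gamma_eq_betaIntegral (s := 1 + z) (t := 1 - z)
    (by simp [hzre]) (by simp [hzre])
  have h2 : (1 + z) + (1 - z) = ((1 : ℕ) : ℂ) + 1 := by push_cast; ring
  rw [h2, Complex.Gamma_nat_eq_factorial, hbeta, hcv, add_comm 1 z, Complex.Gamma_add_one z hzne,
    mul_assoc, Complex.Gamma_mul_Gamma_one_sub] at hG
  have hsin : Complex.sin (Real.pi * z) = ((Real.sinh (Real.pi * ω / 2) : ℝ) : ℂ) * Complex.I := by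
    rw [Complex.ofReal_sinh, ← Complex.sin_mul_I]
    congr 1; rw [hz]; push_cast; ring
  have hsh : 0 < Real.sinh (Real.pi * ω / 2) := Real.sinh_pos_iff.2 (by positivity)
  have hsh' : ((Real.sinh (Real.pi * ω / 2) : ℝ) : ℂ) ≠ 0 := by exact_mod_cast hsh.ne'
  rw [hsin, hz] at hG
  have hI := Complex.I_ne_zero
  have hG' : ∫ t : ℝ, Complex.exp (Complex.I * ω * t) * ((sech t ^ 2 : ℝ) : ℂ) =
      2 * (Complex.I * ω / 2 * (Real.pi / (((Real.sinh (Real.pi * ω / 2) : ℝ) : ℂ) * Complex.I))) := by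
    rw [hG]; simp
  rw [hG', Complex.ofReal_div, Complex.ofReal_mul]
  field_simp

lemma fg_cos (ω : ℝ) (hω : 0 < ω) :
    ∫ t : ℝ, Real.cos (ω * t) * sech t ^ 2 = Real.pi * ω / Real.sinh (Real.pi * ω / 2) := by
  have h := congrArg Complex.re (fg_fourier ω hω)
  rw [Complex.ofReal_re] at h
  rw [← h]
  have hi : Integrable (fun t : ℝ => Complex.exp (Complex.I * ω * t) * ((sech t ^ 2 : ℝ) : ℂ)) := by
    have : Integrable (fun t : ℝ => sech t ^ 2) := by
      refine fg_integrable (by fun_prop) 1 fun t => ?_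
      have := sech_pos t; have := sech_le_one t
      rw [abs_of_nonneg (by positivity)]
      nlinarith
    refine Integrable.mono' this (Continuous.aestronglyMeasurable (by fun_prop)) ?_
    refine Eventually.of_forall fun t => ?_
    have e : Complex.I * ω * t = ((ω * t : ℝ) : ℂ) * Complex.I := by push_cast; ring
    rw [norm_mul, e, Complex.norm_exp_ofReal_mul_I, Complex.norm_real, Real.norm_eq_abs,
      abs_of_nonneg (by positivity), one_mul]
  have := integral_re hi
  simp only [RCLike.re_to_complex] at this
  rw [← this]
  refine integral_congr_ae (Eventually.of_forall fun t => ?_)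
  have e : Complex.I * ω * t = ((ω * t : ℝ) : ℂ) * Complex.I := by push_cast; ring
  simp only
  rw [e, Complex.re_mul_ofReal, Complex.exp_ofReal_mul_I_re]

lemma fg_B : (19 / 100 : ℝ) ≤ ∫ t : ℝ, Real.cos (2 * √2 * t) * sech t ^ 2 := by
  rw [fg_cos _ (by positivity)]
  have h2 : √2 * √2 = 2 := Real.mul_self_sqrt (by norm_num)
  have hp := Real.sqrt_nonneg 2
  have hl : (1.414 : ℝ) < √2 := by rw [Real.lt_sqrt] <;> norm_num
  have hu : √2 < 1.4143 := by rw [Real.sqrt_lt'] <;> norm_num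
  have p1 := Real.pi_gt_d4
  have p2 := Real.pi_lt_d4
  have hx : Real.pi * (2 * √2) / 2 ≤ 9 / 2 := by nlinarith
  have hs0 : 0 < Real.sinh (Real.pi * (2 * √2) / 2) := Real.sinh_pos_iff.2 (by positivity)
  have he : Real.exp (9 / 2) ≤ 91 := by
    have h9 : Real.exp (9 / 2) ^ 2 = Real.exp 1 ^ 9 := by
      rw [← Real.exp_nat_mul, ← Real.exp_nat_mul]; norm_num
    have : Real.exp 1 ^ 9 ≤ 2.7182818286 ^ 9 :=
      pow_le_pow_left₀ (Real.exp_pos _).le Real.exp_one_lt_d9.le 9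
    refine abs_le_of_sq_le_sq' ?_ (by norm_num) |>.2
    rw [h9]; refine this.trans (by norm_num)
  have hs : Real.sinh (Real.pi * (2 * √2) / 2) ≤ 91 / 2 := by
    refine (Real.sinh_le_sinh.2 hx).trans ?_
    rw [Real.sinh_eq]
    have := Real.exp_pos (-(9 / 2 : ℝ))
    linarith
  rw [le_div_iff₀ hs0]
  nlinarith

/-- The imaginary part of the Jost function in the variable `t = x / √2`. -/
noncomputable def fgK (t : ℝ) : ℝ :=
  Real.sin (2 * √2 * t) * (1 + sech t ^ 2 / 2) + √2 * Real.cos (2 * √2 * t) * Real.tanh t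

/-- The source term in the variable `t = x / √2`. -/
noncomputable def fgP (κ t : ℝ) : ℝ :=
  3 / 2 * (3 * √2 / 4 * Real.tanh t ^ 3 * sech t ^ 2 - κ * Real.tanh t * sech t)

/-- The correction with exact derivative. -/
noncomputable def fgPhi (κ t : ℝ) : ℝ :=
  3 / 2 * (3 * √2 / 4 *
    (Real.sin (2 * √2 * t) * (sech t ^ 2 / 3 - sech t ^ 4 / 24 + sech t ^ 6 / 12)
      + Real.cos (2 * √2 * t) * (-(5 * √2 / 12) * (sech t ^ 2 * Real.tanh t)
        + √2 / 6 * (sech t ^ 4 * Real.tanh t)))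
    - κ * (Real.sin (2 * √2 * t) * (sech t / 3 - sech t ^ 3 / 6)
      + Real.cos (2 * √2 * t) * (-(√2 / 3) * (sech t * Real.tanh t))))

lemma fg_sqrt2 : √2 ^ 2 = (2 : ℝ) := Real.sq_sqrt (by norm_num)

lemma fgPhi_deriv (κ t : ℝ) : HasDerivAt (fgPhi κ)
    (fgK t * fgP κ t + 9 / 8 * (Real.cos (2 * √2 * t) * sech t ^ 2)) t := by
  have hl : HasDerivAt (fun t : ℝ => 2 * √2 * t) (2 * √2) t := by
    simpa using (hasDerivAt_id t).const_mul (2 * √2)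
  have hs := hl.sin
  have hc := hl.cos
  have hS := sech_hasDeriv t
  have hT := tanh_hasDeriv t
  have h := ((((hs.mul ((((hS.fun_pow 2).div_const 3).sub ((hS.fun_pow 4).div_const 24)).add
      ((hS.fun_pow 6).div_const 12))).add
    (hc.mul ((((hS.fun_pow 2).mul hT).const_mul (-(5 * √2 / 12))).add
      (((hS.fun_pow 4).mul hT).const_mul (√2 / 6))))).const_mul (3 * √2 / 4)).sub
    (((hs.mul ((hS.div_const 3).sub ((hS.fun_pow 3).div_const 6))).add
      (hc.mul ((hS.mul hT).const_mul (-(√2 / 3))))).const_mul κ)).const_mul (3 / 2)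
  refine h.congr_deriv ?_
  unfold fgK fgP
  simp only [Pi.mul_apply, Pi.add_apply, Pi.sub_apply, Pi.pow_apply]
  have e := sech_sq t
  have e2 := fg_sqrt2
  generalize Real.sin (2 * √2 * t) = s
  generalize Real.cos (2 * √2 * t) = C
  generalize Real.tanh t = T at *
  generalize sech t = S at *
  generalize √2 = r at *
  push_cast
  have e3 : T ^ 3 = T * (1 - S ^ 2) := by rw [← e]; ring
  have e4 : T ^ 4 = (1 - S ^ 2) ^ 2 := by rw [← e]; ring
  have e5 : r ^ 3 = 2 * r := by rw [← e2]; ring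
  ring_nf
  simp only [e, e2, e3, e4, e5]
  ring

lemma fgK_bound (t : ℝ) : |fgK t| ≤ 7 / 4 := by
  have h1 := Real.sin_sq_add_cos_sq (2 * √2 * t)
  have e := sech_sq t
  have e2 := fg_sqrt2
  have p := sech_pos t
  have q := sech_le_one t
  unfold fgK
  generalize Real.sin (2 * √2 * t) = s at *
  generalize Real.cos (2 * √2 * t) = C at *
  generalize Real.tanh t = T at *
  generalize sech t = S at *
  generalize √2 = r at *
  apply abs_le_of_sq_le_sq _ (by norm_num)
  have cs : (s * (1 + S ^ 2 / 2) + r * C * T) ^ 2 ≤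
      (s ^ 2 + C ^ 2) * ((1 + S ^ 2 / 2) ^ 2 + r ^ 2 * T ^ 2) := by
    nlinarith [sq_nonneg (s * (r * T) - C * (1 + S ^ 2 / 2))]
  rw [h1, e2, e] at cs
  refine cs.trans ?_
  have : S ^ 2 ≤ 1 := by nlinarith
  nlinarith [sq_nonneg S]

lemma fg_cubic (t : ℝ) : Real.tanh t ^ 2 * sech t ≤ 2 / 5 := by
  rw [sech_sq]
  have p := sech_pos t
  have q := sech_le_one t
  nlinarith [mul_nonneg (sq_nonneg (sech t - 4 / 7)) (by linarith : 0 ≤ sech t + 8 / 7)]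

lemma fg_r : (1.414 : ℝ) < √2 ∧ √2 < 1.4143 := by
  constructor
  · rw [Real.lt_sqrt] <;> norm_num
  · rw [Real.sqrt_lt'] <;> norm_num

lemma fgP_bound (κ t : ℝ) (h0 : 0 ≤ κ) (h1 : κ ≤ 43 / 100) :
    |fgP κ t| ≤ 129 / 200 * sech t := by
  have p := sech_pos t
  have c := fg_cubic t
  obtain ⟨r1, r2⟩ := fg_r
  have ht := (Real.abs_tanh_lt_one t).le
  have e : fgP κ t = 3 / 2 * ((3 * √2 / 4 * (Real.tanh t ^ 2 * sech t) - κ) *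
      (Real.tanh t * sech t)) := by unfold fgP; ring
  have hn : 0 ≤ Real.tanh t ^ 2 * sech t := by positivity
  have hb : |3 * √2 / 4 * (Real.tanh t ^ 2 * sech t) - κ| ≤ 43 / 100 := by
    rw [abs_le]; constructor <;> nlinarith
  have hb2 : |Real.tanh t * sech t| ≤ sech t := by
    rw [abs_mul, abs_of_pos p]; nlinarith
  rw [e, abs_mul, abs_mul, abs_of_pos (by norm_num : (0:ℝ) < 3 / 2)]
  have := mul_le_mul hb hb2 (abs_nonneg _) (by norm_num)
  linarith

lemma fgPhi_bound (κ t : ℝ) (h0 : 0 ≤ κ) (h1 : κ ≤ 43 / 100) :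
    |fgPhi κ t| ≤ 10 * sech t := by
  have p := sech_pos t
  have q := sech_le_one t
  obtain ⟨r1, r2⟩ := fg_r
  have ht := (Real.abs_tanh_lt_one t).le
  have hs := Real.abs_sin_le_one (2 * √2 * t)
  have hc := Real.abs_cos_le_one (2 * √2 * t)
  unfold fgPhi
  generalize Real.sin (2 * √2 * t) = s at *
  generalize Real.cos (2 * √2 * t) = C at *
  generalize Real.tanh t = T at *
  generalize sech t = S at *
  generalize √2 = r at *
  have pw : ∀ n : ℕ, S ^ n ≤ 1 ∧ 0 ≤ S ^ n := fun n => ⟨pow_le_one₀ p.le q, by positivity⟩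
  have m : ∀ a b A : ℝ, |a| ≤ 1 → |b| ≤ A → |a * b| ≤ A := fun a b A ha hb => by
    rw [abs_mul]; nlinarith [abs_nonneg a, abs_nonneg b]
  have a1 : |s * (S / 3 - S ^ 3 / 24 + S ^ 5 / 12)| ≤ 1 := m _ _ _ hs (by
    rw [abs_le]; constructor <;> linarith [pw 3, pw 5, (pw 3).1, (pw 3).2, (pw 5).1, (pw 5).2])
  have a2 : |s * (1 / 3 - S ^ 2 / 6)| ≤ 1 := m _ _ _ hs (by
    rw [abs_le]; constructor <;> linarith [(pw 2).1, (pw 2).2])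
  have a3 : |C * (T * (-(5 * r / 12) * S + r / 6 * S ^ 3))| ≤ 1 := m _ _ _ hc (m _ _ _ ht (by
    rw [abs_le]; constructor <;> nlinarith [(pw 3).1, (pw 3).2]))
  have a4 : |C * (T * (-(r / 3)))| ≤ 1 := m _ _ _ hc (m _ _ _ ht (by
    rw [abs_le]; constructor <;> nlinarith))
  have e : 3 / 2 * (3 * r / 4 * (s * (S ^ 2 / 3 - S ^ 4 / 24 + S ^ 6 / 12)
      + C * (-(5 * r / 12) * (S ^ 2 * T) + r / 6 * (S ^ 4 * T)))
      - κ * (s * (S / 3 - S ^ 3 / 6) + C * (-(r / 3) * (S * T)))) =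
      (3 / 2 * (3 * r / 4 * (s * (S / 3 - S ^ 3 / 24 + S ^ 5 / 12)
        + C * (T * (-(5 * r / 12) * S + r / 6 * S ^ 3)))
      - κ * (s * (1 / 3 - S ^ 2 / 6) + C * (T * (-(r / 3)))))) * S := by ring
  have e' : 3 / 2 * (3 * r / 4 * (s * (S ^ 2 / 3 - S ^ 4 / 24 + S ^ 6 / 12)
      + C * (-(5 * r / 12) * (S ^ 2 * T) + r / 6 * (S ^ 4 * T)))
      - κ * (s * (S / 3 - S ^ 3 / 6) + C * (-(r / 3) * (S * T)))) =
      (3 / 2 * (3 * r / 4 * (s * (S / 3 - S ^ 3 / 24 + S ^ 5 / 12)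
        + C * (T * (-(5 * r / 12) * S + r / 6 * S ^ 3))))
      - 3 / 2 * (κ * (s * (1 / 3 - S ^ 2 / 6) + C * (T * (-(r / 3)))))) * S := by ring
  rw [e', abs_mul, abs_of_pos p]
  refine mul_le_mul_of_nonneg_right ?_ p.le
  clear e e'
  rw [abs_le] at a1 a2 a3 a4
  generalize s * (S / 3 - S ^ 3 / 24 + S ^ 5 / 12) = x1 at *
  generalize s * (1 / 3 - S ^ 2 / 6) = x2 at *
  generalize C * (T * (-(5 * r / 12) * S + r / 6 * S ^ 3)) = x3 at *
  generalize C * (T * (-(r / 3))) = x4 at *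
  have b1 : |r * (x1 + x3)| ≤ 1.4143 * 2 := by
    rw [abs_mul]; refine mul_le_mul ?_ ?_ (abs_nonneg _) (by norm_num)
    · rw [abs_of_pos (by linarith)]; linarith
    · rw [abs_le]; constructor <;> linarith [a1.1, a1.2, a3.1, a3.2]
  have b2 : |κ * (x2 + x4)| ≤ 43 / 100 * 2 := by
    rw [abs_mul]; refine mul_le_mul ?_ ?_ (abs_nonneg _) (by norm_num)
    · rw [abs_of_nonneg (by linarith)]; linarith
    · rw [abs_le]; constructor <;> linarith [a2.1, a2.2, a4.1, a4.2]
  rw [abs_le] at b1 b2 ⊢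
  constructor <;> linarith [b1.1, b1.2, b2.1, b2.2]

@[fun_prop]
lemma fgK_cont : Continuous fgK := by unfold fgK; fun_prop

@[fun_prop]
lemma fgP_cont (κ : ℝ) : Continuous (fgP κ) := by unfold fgP; fun_prop

lemma fgKP_bound (κ t : ℝ) (h0 : 0 ≤ κ) (h1 : κ ≤ 43 / 100) :
    |fgK t * fgP κ t| ≤ 903 / 800 * sech t := by
  rw [abs_mul]
  have := mul_le_mul (fgK_bound t) (fgP_bound κ t h0 h1) (abs_nonneg _) (by norm_num)
  linarith

lemma fg_main (κ : ℝ) (h0 : 0 ≤ κ) (h1 : κ ≤ 43 / 100) :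
    ∫ t, fgK t * fgP κ t * sech (t / 8) ^ 2 < 0 := by
  have i1 : Integrable (fun t => fgK t * fgP κ t) :=
    fg_integrable (by fun_prop) _ fun t => fgKP_bound κ t h0 h1
  have i2 : Integrable (fun t => Real.cos (2 * √2 * t) * sech t ^ 2) := by
    refine fg_integrable (by fun_prop) 1 fun t => ?_
    have p := sech_pos t
    have q := sech_le_one t
    rw [abs_mul, abs_of_nonneg (sq_nonneg (sech t))]
    exact mul_le_mul (Real.abs_cos_le_one _) (by nlinarith) (by positivity) (by norm_num)
  have m1 : ∫ t, (fgK t * fgP κ t + 9 / 8 * (Real.cos (2 * √2 * t) * sech t ^ 2)) = 0 :=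
    fg_ftc (fgPhi_deriv κ) (i1.add (i2.const_mul _)) 10 fun t => fgPhi_bound κ t h0 h1
  rw [integral_add i1 (i2.const_mul _), integral_const_mul] at m1
  have hB := fg_B
  -- the error term
  have hle : ∀ t, fgK t * fgP κ t * sech (t / 8) ^ 2 ≤
      fgK t * fgP κ t + 903 / 25600 * (|t| ^ 2 * Real.exp (-|t|)) := by
    intro t
    have hb := fgKP_bound κ t h0 h1
    have hs := sech_le_exp t
    have hw := sech_sq (t / 8)
    have ht : Real.tanh (t / 8) ^ 2 ≤ |t| ^ 2 / 64 := by
      have := sq_le_sq.2 (abs_tanh_le_abs (t / 8))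
      rw [sq_abs]; linarith
    have hb' : |fgK t * fgP κ t| ≤ 903 / 400 * Real.exp (-|t|) := by linarith
    have hx : -(fgK t * fgP κ t) * Real.tanh (t / 8) ^ 2 ≤
        (903 / 400 * Real.exp (-|t|)) * (|t| ^ 2 / 64) :=
      mul_le_mul ((neg_le_abs _).trans hb') ht (sq_nonneg _) (by positivity)
    have : sech (t / 8) ^ 2 = 1 - Real.tanh (t / 8) ^ 2 := by linarith
    rw [this]
    linarith
  obtain ⟨i3, e3⟩ := fg_absexp 2
  have i4 : Integrable (fun t => fgK t * fgP κ t * sech (t / 8) ^ 2) := by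
    refine fg_integrable (by fun_prop) (903 / 800) fun t => ?_
    have p := sech_pos (t / 8)
    have q := sech_le_one (t / 8)
    have hb := fgKP_bound κ t h0 h1
    rw [abs_mul, abs_of_nonneg (sq_nonneg (sech (t / 8)))]
    have : sech (t / 8) ^ 2 ≤ 1 := by nlinarith
    nlinarith [abs_nonneg (fgK t * fgP κ t)]
  have := integral_mono i4 (i1.add (i3.const_mul _)) hle
  refine this.trans_lt ?_
  simp only [Pi.add_apply]
  rw [integral_add i1 (i3.const_mul _), integral_const_mul, e3]
  norm_num [Nat.factorial] at *
  linarith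

/-- The normalisation constant of `Y1`. -/
noncomputable def fgc : ℝ := (2 : ℝ) ^ (-(3 : ℝ) / 4) * √3

lemma fgc_pos : 0 < fgc := by unfold fgc; positivity

lemma fgc_four : fgc ^ 4 = 9 / 8 := by
  unfold fgc
  have h3 : √3 ^ 4 = (9 : ℝ) := by
    have : √3 ^ 2 = (3 : ℝ) := Real.sq_sqrt (by norm_num)
    calc √3 ^ 4 = (√3 ^ 2) ^ 2 := by ring
      _ = 9 := by rw [this]; norm_num
  rw [mul_pow, h3, ← Real.rpow_natCast, ← Real.rpow_mul (by norm_num)]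
  norm_num

lemma fgc_two : fgc ^ 2 = 3 * √2 / 4 := by
  have h := fgc_four
  have e := fg_sqrt2
  have p := fgc_pos
  refine (pow_left_inj₀ (by positivity) (by positivity) (two_ne_zero)).1 ?_
  rw [← pow_mul]
  norm_num [h, div_pow, mul_pow]

lemma fg_kappa : 0 ≤ fgc * (∫ y : ℝ, Hkink y * (Y1 y) ^ 3) ∧
    fgc * (∫ y : ℝ, Hkink y * (Y1 y) ^ 3) ≤ 43 / 100 := by
  have e : ∀ y, Hkink y * (Y1 y) ^ 3 =
      (fun t => fgc ^ 3 * (Real.tanh t ^ 4 * sech t ^ 3)) (y / √2) := by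
    intro y; simp only [Hkink, Y1, fgc]; ring
  simp_rw [e]
  rw [Measure.integral_comp_div (fun t => fgc ^ 3 * (Real.tanh t ^ 4 * sech t ^ 3)),
    integral_const_mul, abs_of_nonneg (Real.sqrt_nonneg 2), smul_eq_mul]
  have e1 : ∀ J : ℝ, fgc * (√2 * (fgc ^ 3 * J)) = 9 / 8 * √2 * J := by
    intro J; rw [← fgc_four]; ring
  rw [e1]
  have hn : ∀ t, 0 ≤ Real.tanh t ^ 4 * sech t ^ 3 := fun t => by
    have := sech_pos t
    positivity
  have hJ0 : 0 ≤ ∫ t, Real.tanh t ^ 4 * sech t ^ 3 := integral_nonneg hn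
  have hi : Integrable (fun t => 2 / 5 * (Real.tanh t ^ 2 * sech t ^ 2)) := by
    refine Integrable.const_mul ?_ _
    by_contra h
    have := fg_int_TS
    rw [integral_undef h] at this
    norm_num at this
  have hJ1 : ∫ t, Real.tanh t ^ 4 * sech t ^ 3 ≤ 4 / 15 := by
    have : ∫ t, Real.tanh t ^ 4 * sech t ^ 3 ≤ ∫ t, 2 / 5 * (Real.tanh t ^ 2 * sech t ^ 2) := by
      refine integral_mono_of_nonneg (Eventually.of_forall hn) hi (Eventually.of_forall fun t => ?_)
      have h2 : 0 ≤ Real.tanh t ^ 2 * sech t ^ 2 := by positivity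
      have := mul_le_mul_of_nonneg_right (fg_cubic t) h2
      dsimp only
      linarith
    rw [integral_const_mul, fg_int_TS] at this
    linarith
  obtain ⟨r1, r2⟩ := fg_r
  constructor
  · positivity
  · nlinarith

theorem modified_fermi_golden_rule :
    (∫ x : ℝ, (kJost x).im * fsrc x * sech (x / (8 * Real.sqrt 2)) ^ 2) ≠ 0 := by
  obtain ⟨k0, k1⟩ := fg_kappa
  set κ := fgc * (∫ y : ℝ, Hkink y * (Y1 y) ^ 3) with hκ
  have r0 : √2 ≠ 0 := by positivity
  have e : ∀ x : ℝ, (kJost x).im * fsrc x * sech (x / (8 * Real.sqrt 2)) ^ 2 =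
      (fun t => fgK t * fgP κ t * sech (t / 8) ^ 2) (x / √2) := by
    intro x
    have h1 : (kJost x).im = fgK (x / √2) := by
      have hx : 2 * Complex.I * (x : ℂ) = ((2 * x : ℝ) : ℂ) * Complex.I := by push_cast; ring
      have hx2 : 2 * √2 * (x / √2) = 2 * x := by field_simp
      unfold kJost fgK
      rw [hx, hx2, Complex.mul_im, Complex.exp_ofReal_mul_I_re, Complex.exp_ofReal_mul_I_im]
      simp only [Complex.add_re, Complex.add_im, Complex.one_re, Complex.one_im, Complex.ofReal_re,
        Complex.ofReal_im, Complex.mul_re, Complex.mul_im, Complex.I_re, Complex.I_im]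
      ring
    have h2 : fsrc x = fgP κ (x / √2) := by
      unfold fsrc fgP
      rw [← fgc_two, hκ]
      have hy : Y1 x = fgc * Real.tanh (x / √2) * sech (x / √2) := rfl
      rw [hy, Hkink]
      ring
    have h3 : x / (8 * √2) = x / √2 / 8 := by field_simp
    rw [h1, h2, h3]
  simp_rw [e]
  rw [Measure.integral_comp_div (fun t => fgK t * fgP κ t * sech (t / 8) ^ 2), smul_eq_mul]
  exact mul_ne_zero (abs_ne_zero.2 r0) (fg_main κ k0 k1).ne
end

section
/- For every odd differentiable function w : ℝ → ℝ with w and w' square integrable on ℝ, one has ∫_ℝ w'(x)² dx - 3·∫_ℝ sech²(x/2)·w(x)² dx + ( ∫_ℝ Ỹ₁(x)·w(x) dx )² ≥ 0, where Ỹ₁(x) = √(15/8)·sinh(x/2)/cosh³(x/2). -/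
open MeasureTheory

noncomputable def Ytilde (x : ℝ) : ℝ :=
  Real.sqrt (15 / 8) * Real.sinh (x / 2) / Real.cosh (x / 2) ^ 3

open Filter Topology Set

/-- The function tanh (x / 2). -/
noncomputable def TT (x : ℝ) : ℝ := 1 - 2 / (Real.exp x + 1)

lemma TT_eq (x : ℝ) : TT x = Real.sinh (x / 2) / Real.cosh (x / 2) := by
  have h1 : Real.exp x = Real.exp (x / 2) * Real.exp (x / 2) := by
    rw [← Real.exp_add]; ring_nf
  have h0 := Real.exp_pos (x / 2)
  rw [TT, Real.sinh_eq, Real.cosh_eq, h1, Real.exp_neg]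
  set e := Real.exp (x / 2)
  field_simp
  ring

lemma TT_hasDerivAt (x : ℝ) : HasDerivAt TT ((1 - TT x ^ 2) / 2) x := by
  have h0 := Real.exp_pos x
  have h := ((hasDerivAt_const x (2 : ℝ)).div ((Real.hasDerivAt_exp x).add_const 1)
    (by positivity)).const_sub 1
  refine h.congr_deriv ?_
  rw [TT]
  field_simp
  ring

lemma TT_cont : Continuous TT :=
  continuous_iff_continuousAt.2 fun x => (TT_hasDerivAt x).continuousAt

lemma TT_zero : TT 0 = 0 := by norm_num [TT]

lemma TT_pos {x : ℝ} (hx : 0 < x) : 0 < TT x := by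
  have : 1 < Real.exp x := Real.one_lt_exp_iff.2 hx
  rw [TT, sub_pos, div_lt_one] <;> linarith

lemma TT_lt_one (x : ℝ) : TT x < 1 := by
  have := Real.exp_pos x
  have : 0 < 2 / (Real.exp x + 1) := by positivity
  rw [TT]; linarith

lemma TT_tendsto : Tendsto TT atTop (𝓝 1) := by
  have h : Tendsto (fun x => 2 / (Real.exp x + 1)) atTop (𝓝 0) :=
    tendsto_const_nhds.div_atTop (tendsto_atTop_add_const_right _ _ Real.tendsto_exp_atTop)
  have h2 := (tendsto_const_nhds (x := (1 : ℝ))).sub h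
  rw [sub_zero] at h2
  exact h2

/-- The unnormalised odd bound state. -/
noncomputable def YY (x : ℝ) : ℝ := TT x * (1 - TT x ^ 2)

lemma sech_sq_s13 (x : ℝ) : sech (x / 2) ^ 2 = 1 - TT x ^ 2 := by
  have h := Real.cosh_sq (x / 2)
  have h0 := Real.cosh_pos (x / 2)
  rw [sech, TT_eq]
  field_simp
  linarith

lemma Ytilde_eq (x : ℝ) : Ytilde x = Real.sqrt (15 / 8) * YY x := by
  have h0 := Real.cosh_pos (x / 2)
  rw [YY, ← sech_sq_s13, Ytilde, sech, TT_eq]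
  field_simp

lemma YY_cont : Continuous YY := by
  unfold YY; have := TT_cont; fun_prop

lemma YY_pos {x : ℝ} (hx : 0 < x) : 0 < YY x := by
  have h1 := TT_pos hx
  have h2 := TT_lt_one x
  have : 0 < 1 - TT x ^ 2 := by nlinarith
  unfold YY; positivity

lemma one_sub_pos {x : ℝ} (hx : 0 < x) : 0 < 1 - TT x ^ 2 := by
  have h1 := TT_pos hx
  have h2 := TT_lt_one x
  nlinarith

/-- The antiderivative of `YY ^ 2`. -/
noncomputable def FF (x : ℝ) : ℝ := 2 * (TT x ^ 3 / 3 - TT x ^ 5 / 5)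

lemma FF_hasDerivAt (x : ℝ) : HasDerivAt FF (YY x ^ 2) x := by
  have h := TT_hasDerivAt x
  have h2 := (((h.fun_pow 3).div_const 3).fun_sub ((h.fun_pow 5).div_const 5)).const_mul 2
  refine h2.congr_deriv ?_
  simp only [YY]; push_cast; ring

lemma FF_tendsto : Tendsto FF atTop (𝓝 (4 / 15)) := by
  have h := ((TT_tendsto.pow 3).div_const 3).sub ((TT_tendsto.pow 5).div_const 5)
  have h2 := h.const_mul 2
  have e : (2 * (1 ^ 3 / 3 - 1 ^ 5 / 5) : ℝ) = 4 / 15 := by norm_num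
  rw [e] at h2
  exact h2

lemma YY_hasDerivAt (x : ℝ) :
    HasDerivAt YY ((1 - 3 * TT x ^ 2) * (1 - TT x ^ 2) / 2) x := by
  have h := TT_hasDerivAt x
  refine (h.fun_mul ((h.fun_pow 2).const_sub 1)).congr_deriv ?_
  push_cast; ring

/-- The boundary function. -/
noncomputable def GG (a : ℝ) (v J : ℝ → ℝ) (x : ℝ) : ℝ :=
  (1 - 3 * TT x ^ 2) / (2 * TT x) * v x ^ 2 - 2 * v x * (J x / YY x)
    + (3 - 5 * TT x ^ 2) / (2 * TT x) * (J x / YY x) ^ 2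
    + a * ((1 - 3 * TT x ^ 2) * (1 - TT x ^ 2)) * v x
    + a ^ 2 * (YY x * ((1 - 3 * TT x ^ 2) * (1 - TT x ^ 2) / 2))

lemma GG_deriv (a : ℝ) (v J : ℝ → ℝ) (x v' : ℝ) (hx : 0 < x) (hv : HasDerivAt v v' x)
    (hJ : HasDerivAt J (YY x * v x) x) :
    ∃ g', HasDerivAt (GG a v J) g' x ∧
      g' ≤ (v' + a * ((1 - 3 * TT x ^ 2) * (1 - TT x ^ 2) / 2)) ^ 2
        - 3 * ((1 - TT x ^ 2) * (v x + a * YY x) ^ 2)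
        + (2 * a * (YY x * (v x + a * YY x)) - a ^ 2 * YY x ^ 2) := by
  have hT := TT_hasDerivAt x
  have hY := YY_hasDerivAt x
  have tp := TT_pos hx
  have kp := one_sub_pos hx
  have yp := YY_pos hx
  have h3 := (hT.fun_pow 2).const_mul 3 |>.const_sub 1
  have h5 := (hT.fun_pow 2).const_mul 5 |>.const_sub 3
  have h1 := (hT.fun_pow 2).const_sub 1
  have h2T := hT.const_mul 2
  have hz := hJ.fun_div hY yp.ne'
  have hne : 2 * TT x ≠ 0 := by positivity
  have H := (((((h3.fun_div h2T hne).fun_mul (hv.fun_pow 2)).fun_sub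
    ((hv.const_mul 2).fun_mul hz)).fun_add ((h5.fun_div h2T hne).fun_mul (hz.fun_pow 2))).fun_add
    (((h3.fun_mul h1).const_mul a).fun_mul hv)).fun_add
    ((hY.fun_mul ((h3.fun_mul h1).div_const 2)).const_mul (a ^ 2))
  refine ⟨_, H, ?_⟩
  rw [← sub_nonneg]
  have key : 0 ≤ (v' - (1 - 3 * TT x ^ 2) / (2 * TT x) * v x + J x / YY x) ^ 2
      + (v x - (3 - 5 * TT x ^ 2) / (2 * TT x) * (J x / YY x)) ^ 2 := by positivity
  refine key.trans_eq ?_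
  unfold YY
  generalize TT x = t at *
  generalize J x = j at *
  generalize v x = u at *
  have k0 : 1 - t ^ 2 ≠ 0 := kp.ne'
  have t0 : t ≠ 0 := tp.ne'
  push_cast
  field_simp
  ring

lemma GG_zero (a : ℝ) (v J : ℝ → ℝ) (hv0 : v 0 = 0) : GG a v J 0 = 0 := by
  simp [GG, YY, TT_zero, hv0]

lemma GG_tendsto_zero (a : ℝ) (v J : ℝ → ℝ) (hv0 : v 0 = 0) (hv : Differentiable ℝ v)
    (hJ0 : J 0 = 0) (hJ : ∀ x, HasDerivAt J (YY x * v x) x) :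
    Tendsto (GG a v J) (𝓝[>] 0) (𝓝 0) := by
  have hTl : Tendsto TT (𝓝[>] 0) (𝓝 0) := by
    have := TT_cont.tendsto 0
    rw [TT_zero] at this
    exact this.mono_left nhdsWithin_le_nhds
  have hvl : Tendsto v (𝓝[>] 0) (𝓝 0) := by
    have := hv.continuous.tendsto 0
    rw [hv0] at this
    exact this.mono_left nhdsWithin_le_nhds
  have hJl : Tendsto J (𝓝[>] 0) (𝓝 0) := by
    have := (hJ 0).continuousAt.tendsto
    rw [hJ0] at this
    exact this.mono_left nhdsWithin_le_nhds
  have hq : Tendsto (fun x => J x / TT x ^ 2) (𝓝[>] 0) (𝓝 0) := by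
    refine HasDerivAt.lhopital_zero_nhdsGT (f' := fun x => YY x * v x) (g' := YY)
      (Eventually.of_forall hJ) (Eventually.of_forall fun x => ?_) ?_ hJl ?_ ?_
    · refine ((TT_hasDerivAt x).fun_pow 2).congr_deriv ?_
      unfold YY; push_cast; ring
    · filter_upwards [self_mem_nhdsWithin] with x hx using (YY_pos hx).ne'
    · simpa using hTl.pow 2
    · refine hvl.congr' ?_
      filter_upwards [self_mem_nhdsWithin] with x hx
      have := YY_pos hx
      field_simp
  have hvx : Tendsto (fun x => v x / x) (𝓝[>] 0) (𝓝 (deriv v 0)) := by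
    have h := (hasDerivAt_iff_tendsto_slope.1 (hv 0).hasDerivAt).mono_left
      (nhdsWithin_mono (0:ℝ) (fun x (hx : 0 < x) => hx.ne'))
    refine h.congr fun x => ?_
    simp [slope_def_field, hv0]
  have hTx : Tendsto (fun x => TT x / x) (𝓝[>] 0) (𝓝 (1 / 2)) := by
    have h := (hasDerivAt_iff_tendsto_slope.1 (TT_hasDerivAt 0)).mono_left
      (nhdsWithin_mono (0:ℝ) (fun x (hx : 0 < x) => hx.ne'))
    rw [TT_zero] at h
    norm_num at h
    norm_num
    refine h.congr fun x => ?_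
    simp [slope_def_field, TT_zero]
  have hvT : Tendsto (fun x => v x / TT x) (𝓝[>] 0) (𝓝 (deriv v 0 / (1 / 2))) := by
    refine (hvx.div hTx (by norm_num)).congr' ?_
    filter_upwards [self_mem_nhdsWithin] with x hx
    have hx' : (x : ℝ) ≠ 0 := ne_of_gt hx
    have := TT_pos hx
    simp only [Pi.div_apply]
    field_simp
  have hk : Tendsto (fun x => (1 - TT x ^ 2)) (𝓝[>] 0) (𝓝 1) := by
    simpa using (hTl.pow 2).const_sub 1
  have hzT : Tendsto (fun x => J x / TT x ^ 2 / (1 - TT x ^ 2)) (𝓝[>] 0) (𝓝 0) := by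
    have := hq.div hk one_ne_zero
    rw [zero_div] at this
    exact this
  have h3 : Tendsto (fun x => (1 - 3 * TT x ^ 2)) (𝓝[>] 0) (𝓝 1) := by
    simpa using ((hTl.pow 2).const_mul 3).const_sub 1
  have h5 : Tendsto (fun x => (3 - 5 * TT x ^ 2)) (𝓝[>] 0) (𝓝 3) := by
    simpa using ((hTl.pow 2).const_mul 5).const_sub 3
  have L : Tendsto (fun x => (1 - 3 * TT x ^ 2) / 2 * (v x / TT x) * v x
      - 2 * v x * (J x / TT x ^ 2 / (1 - TT x ^ 2) * TT x)
      + (3 - 5 * TT x ^ 2) / 2 * (J x / TT x ^ 2 / (1 - TT x ^ 2)) ^ 2 * TT x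
      + a * ((1 - 3 * TT x ^ 2) * (1 - TT x ^ 2)) * v x
      + a ^ 2 * (TT x * (1 - TT x ^ 2) * ((1 - 3 * TT x ^ 2) * (1 - TT x ^ 2) / 2)))
      (𝓝[>] 0) (𝓝 0) := by
    have := ((((((h3.div_const 2).mul hvT).mul hvl).sub ((hvl.const_mul 2).mul (hzT.mul hTl))).add
      (((h5.div_const 2).mul (hzT.pow 2)).mul hTl)).add
      (((h3.mul hk).const_mul a).mul hvl)).add
      (((hTl.mul hk).mul ((h3.mul hk).div_const 2)).const_mul (a ^ 2))
    simpa using this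
  refine L.congr' ?_
  filter_upwards [self_mem_nhdsWithin] with x hx
  have tp := TT_pos hx
  have kp := one_sub_pos hx
  unfold GG YY
  generalize TT x = t at *
  field_simp

lemma GG_tendsto_atTop (a : ℝ) (v J : ℝ → ℝ) (hvl : Tendsto v atTop (𝓝 0))
    (hJl : Tendsto J atTop (𝓝 0)) (hJ : ∀ x, HasDerivAt J (YY x * v x) x) :
    Tendsto (GG a v J) atTop (𝓝 0) := by
  have hTl := TT_tendsto
  have hk : Tendsto (fun x => (1 - TT x ^ 2)) atTop (𝓝 0) := by
    simpa using (hTl.pow 2).const_sub 1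
  have hq : Tendsto (fun x => J x / (1 - TT x ^ 2)) atTop (𝓝 0) := by
    refine HasDerivAt.lhopital_zero_atTop (f' := fun x => YY x * v x) (g' := fun x => - YY x)
      (Eventually.of_forall hJ) (Eventually.of_forall fun x => ?_) ?_ hJl hk ?_
    · refine (((TT_hasDerivAt x).fun_pow 2).const_sub 1).congr_deriv ?_
      unfold YY; push_cast; ring
    · filter_upwards [eventually_gt_atTop 0] with x hx using (neg_ne_zero.2 (YY_pos hx).ne')
    · have := hvl.neg
      rw [neg_zero] at this
      refine this.congr' ?_
      filter_upwards [eventually_gt_atTop 0] with x hx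
      have := YY_pos hx
      field_simp
  have hz : Tendsto (fun x => J x / YY x) atTop (𝓝 0) := by
    have := hq.div hTl one_ne_zero
    rw [zero_div] at this
    refine this.congr fun x => ?_
    simp only [Pi.div_apply, YY]
    rw [div_div, mul_comm]
  have hY : Tendsto YY atTop (𝓝 0) := by
    have := hTl.mul hk
    rw [mul_zero] at this
    exact this
  have h3 : Tendsto (fun x => (1 - 3 * TT x ^ 2)) atTop (𝓝 (1 - 3 * 1 ^ 2)) :=
    ((hTl.pow 2).const_mul 3).const_sub 1
  have h5 : Tendsto (fun x => (3 - 5 * TT x ^ 2)) atTop (𝓝 (3 - 5 * 1 ^ 2)) :=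
    ((hTl.pow 2).const_mul 5).const_sub 3
  have h2T : Tendsto (fun x => 2 * TT x) atTop (𝓝 (2 * 1)) := hTl.const_mul 2
  have := (((((h3.div h2T (by norm_num)).mul (hvl.pow 2)).sub ((hvl.const_mul 2).mul hz)).add
      ((h5.div h2T (by norm_num)).mul (hz.pow 2))).add
      (((h3.mul hk).const_mul a).mul hvl)).add
      ((hY.mul ((h3.mul hk).div_const 2)).const_mul (a ^ 2))
  have h0 : ((1 - 3 * 1 ^ 2) / (2 * 1) * 0 ^ 2 - 2 * 0 * 0 + (3 - 5 * 1 ^ 2) / (2 * 1) * 0 ^ 2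
      + a * ((1 - 3 * 1 ^ 2) * 0) * 0 + a ^ 2 * (0 * ((1 - 3 * 1 ^ 2) * 0 / 2)) : ℝ) = 0 := by
    ring
  rw [h0] at this
  exact this

lemma YY_sq_integrable : IntegrableOn (fun x => YY x ^ 2) (Ioi 0) :=
  integrableOn_Ioi_deriv_of_nonneg' (fun x _ => FF_hasDerivAt x) (fun _ _ => sq_nonneg _)
    FF_tendsto

lemma YY_sq_integral : ∫ x in Ioi (0 : ℝ), YY x ^ 2 = 4 / 15 := by
  rw [integral_Ioi_of_hasDerivAt_of_nonneg' (fun x _ => FF_hasDerivAt x) (fun _ _ => sq_nonneg _)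
    FF_tendsto]
  simp [FF, TT_zero]

lemma prod_integrable {f g : ℝ → ℝ} {s : Set ℝ} (hf : Measurable f) (hg : Measurable g)
    (hf2 : IntegrableOn (fun x => f x ^ 2) s) (hg2 : IntegrableOn (fun x => g x ^ 2) s) :
    IntegrableOn (fun x => f x * g x) s := by
  refine Integrable.mono' (hf2.add hg2) (hf.mul hg).aestronglyMeasurable
    (Eventually.of_forall fun x => ?_)
  simp only [Pi.add_apply, Real.norm_eq_abs, abs_le]
  constructor <;> nlinarith [sq_nonneg (f x + g x), sq_nonneg (f x - g x)]

lemma half_line (w : ℝ → ℝ) (hw0 : w 0 = 0) (hdiff : Differentiable ℝ w)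
    (hw2 : IntegrableOn (fun x => (w x) ^ 2) (Ioi 0))
    (hw'2 : IntegrableOn (fun x => (deriv w x) ^ 2) (Ioi 0)) :
    0 ≤ (∫ x in Ioi (0 : ℝ), (deriv w x) ^ 2)
      - 3 * (∫ x in Ioi (0 : ℝ), (1 - TT x ^ 2) * (w x) ^ 2)
      + 15 / 4 * (∫ x in Ioi (0 : ℝ), YY x * w x) ^ 2 := by
  have hwm : Measurable w := hdiff.continuous.measurable
  have hw'm : Measurable (deriv w) := measurable_deriv w
  have hYw : IntegrableOn (fun x => YY x * w x) (Ioi 0) :=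
    prod_integrable YY_cont.measurable hwm YY_sq_integrable hw2
  have hSw : IntegrableOn (fun x => (1 - TT x ^ 2) * (w x) ^ 2) (Ioi 0) := by
    refine Integrable.mono' hw2 ?_ ?_
    · have := TT_cont.measurable
      exact (by fun_prop : Measurable _).aestronglyMeasurable
    · filter_upwards [ae_restrict_mem measurableSet_Ioi] with x hx
      have h1 := one_sub_pos hx
      rw [Real.norm_eq_abs, abs_of_nonneg (by positivity)]
      nlinarith [sq_nonneg (w x), mul_nonneg (sq_nonneg (TT x)) (sq_nonneg (w x))]
  have hww' : IntegrableOn (fun x => w x * deriv w x) (Ioi 0) :=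
    prod_integrable hwm hw'm hw2 hw'2
  have hw2l : Tendsto (fun x => w x ^ 2) atTop (𝓝 0) := by
    refine tendsto_zero_of_hasDerivAt_of_integrableOn_Ioi (a := 0)
      (f' := fun x => 2 * (w x * deriv w x)) (fun x _ => ?_) (hww'.const_mul 2) hw2
    refine ((hdiff x).hasDerivAt.fun_pow 2).congr_deriv ?_
    push_cast; ring
  have hwl : Tendsto w atTop (𝓝 0) := by
    rw [tendsto_zero_iff_abs_tendsto_zero]
    have := hw2l.sqrt
    rw [Real.sqrt_zero] at this
    refine this.congr fun x => ?_
    simp [Real.sqrt_sq_eq_abs]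
  set A := ∫ x in Ioi (0 : ℝ), YY x * w x with hA
  set a := 15 / 4 * A with ha
  let v : ℝ → ℝ := fun x => w x - a * YY x
  let J : ℝ → ℝ := fun x => (∫ y in (0:ℝ)..x, YY y * w y) - a * FF x
  have hvd : ∀ x, HasDerivAt v
      (deriv w x - a * ((1 - 3 * TT x ^ 2) * (1 - TT x ^ 2) / 2)) x := fun x =>
    (hdiff x).hasDerivAt.fun_sub ((YY_hasDerivAt x).const_mul a)
  have hJd : ∀ x, HasDerivAt J (YY x * v x) x := fun x => by
    have hc : Continuous fun y => YY y * w y := YY_cont.mul hdiff.continuous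
    have h1 : HasDerivAt (fun x => ∫ y in (0:ℝ)..x, YY y * w y) (YY x * w x) x :=
      intervalIntegral.integral_hasDerivAt_right (hc.intervalIntegrable _ _)
        (hc.stronglyMeasurableAtFilter _ _) hc.continuousAt
    refine (h1.fun_sub ((FF_hasDerivAt x).const_mul a)).congr_deriv ?_
    simp only [v]; ring
  have hY0 : YY 0 = 0 := by simp [YY, TT_zero]
  have hv0 : v 0 = 0 := by simp [v, hw0, hY0]
  have hJ0 : J 0 = 0 := by simp [J, FF, TT_zero]
  have hYl : Tendsto YY atTop (𝓝 0) := by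
    have := TT_tendsto.mul ((TT_tendsto.pow 2).const_sub 1)
    rw [one_pow, sub_self, mul_zero] at this
    exact this
  have hvl : Tendsto v atTop (𝓝 0) := by
    have := hwl.sub (hYl.const_mul a)
    simpa using this
  have hJl : Tendsto J atTop (𝓝 0) := by
    have := (intervalIntegral_tendsto_integral_Ioi 0 hYw tendsto_id).sub (FF_tendsto.const_mul a)
    have e : (∫ x in Ioi (0 : ℝ), YY x * w x) - a * (4 / 15) = 0 := by
      rw [← hA, ha]; ring
    rw [e] at this
    exact this
  let φ : ℝ → ℝ := fun x => deriv w x ^ 2 - 3 * ((1 - TT x ^ 2) * w x ^ 2)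
    + (2 * a * (YY x * w x) - a ^ 2 * YY x ^ 2)
  have hφ : IntegrableOn φ (Ioi 0) :=
    (hw'2.sub (hSw.const_mul 3)).add ((hYw.const_mul (2 * a)).sub
      (YY_sq_integrable.const_mul (a ^ 2)))
  have hφi : ∫ x in Ioi (0 : ℝ), φ x = (∫ x in Ioi (0 : ℝ), (deriv w x) ^ 2)
      - 3 * (∫ x in Ioi (0 : ℝ), (1 - TT x ^ 2) * (w x) ^ 2)
      + (2 * a * A - a ^ 2 * (4 / 15)) := by
    have e1 := integral_add (hw'2.sub (hSw.const_mul 3)) ((hYw.const_mul (2 * a)).sub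
      (YY_sq_integrable.const_mul (a ^ 2)))
    have e2 := integral_sub hw'2 (hSw.const_mul 3)
    have e3 := integral_sub (hYw.const_mul (2 * a)) (YY_sq_integrable.const_mul (a ^ 2))
    rw [integral_const_mul] at e2
    rw [integral_const_mul, integral_const_mul, YY_sq_integral] at e3
    refine e1.trans ?_
    exact congrArg₂ (· + ·) e2 e3
  have hder : ∀ x, 0 < x → ∃ g', HasDerivAt (GG a v J) g' x ∧ g' ≤ φ x := fun x hx => by
    obtain ⟨g', h1, h2⟩ := GG_deriv a v J x _ hx (hvd x) (hJd x)
    refine ⟨g', h1, h2.trans_eq ?_⟩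
    simp only [v, φ, sub_add_cancel]
  choose! g' hg' hg'le using hder
  have hcont : ∀ R, ContinuousOn (GG a v J) (Icc 0 R) := fun R x hx => by
    rcases hx.1.eq_or_lt with h | h
    · subst h
      have h1 : ContinuousWithinAt (GG a v J) (Ioi 0) 0 := by
        have := GG_tendsto_zero a v J hv0 (fun x => (hvd x).differentiableAt) hJ0 hJd
        rw [ContinuousWithinAt, GG_zero a v J hv0]
        exact this
      exact (continuousWithinAt_Ioi_iff_Ici.1 h1).mono Icc_subset_Ici_self
    · exact (hg' x h).continuousAt.continuousWithinAt
  have hineq : ∀ R, 0 ≤ R → GG a v J R ≤ ∫ x in (0:ℝ)..R, φ x := fun R hR => by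
    have := intervalIntegral.sub_le_integral_of_hasDeriv_right_of_le hR (hcont R)
      (fun x hx => (hg' x hx.1).hasDerivWithinAt)
      (((integrableOn_Ici_iff_integrableOn_Ioi).2 hφ).mono_set Icc_subset_Ici_self)
      (fun x hx => hg'le x hx.1)
    rwa [GG_zero a v J hv0, sub_zero] at this
  have hfin := le_of_tendsto_of_tendsto (GG_tendsto_atTop a v J hvl hJl hJd)
    (intervalIntegral_tendsto_integral_Ioi 0 hφ tendsto_id)
    ((eventually_ge_atTop 0).mono hineq)
  rw [hφi] at hfin
  have : 2 * a * A - a ^ 2 * (4 / 15) = 15 / 4 * A ^ 2 := by rw [ha]; ring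
  linarith

lemma even_integral (f : ℝ → ℝ) (hf : ∀ x, f (-x) = f x) :
    ∫ x, f x = 2 * ∫ x in Ioi (0 : ℝ), f x := by
  rw [← integral_comp_abs]
  congr 1; ext x
  rcases abs_choice x with h | h <;> rw [h]
  exact (hf x).symm

theorem odd_quadratic_form_nonneg
    (w : ℝ → ℝ) (hodd : ∀ x : ℝ, w (-x) = -w x)
    (hdiff : Differentiable ℝ w)
    (hw2 : Integrable (fun x => (w x) ^ 2))
    (hw'2 : Integrable (fun x => (deriv w x) ^ 2)) :
    (∫ x : ℝ, (deriv w x) ^ 2) - 3 * (∫ x : ℝ, sech (x / 2) ^ 2 * (w x) ^ 2)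
      + (∫ x : ℝ, Ytilde x * w x) ^ 2 ≥ 0 := by
  have hw0 : w 0 = 0 := by
    have := hodd 0
    rw [neg_zero] at this
    linarith
  have hd : ∀ x, deriv w (-x) = deriv w x := fun x => by
    have h1 : (fun y => w (-y)) = fun y => -w y := funext hodd
    have h2 := congrArg (fun f => deriv f x) h1
    simp only [deriv_comp_neg, deriv.fun_neg] at h2
    linarith
  have h := half_line w hw0 hdiff hw2.integrableOn hw'2.integrableOn
  rw [even_integral (fun x => deriv w x ^ 2) (fun x => by rw [hd]),
    even_integral (fun x => sech (x / 2) ^ 2 * (w x) ^ 2)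
      (fun x => by rw [hodd, sech, sech, neg_div, Real.cosh_neg]; ring),
    even_integral (fun x => Ytilde x * w x)
      (fun x => by rw [hodd, Ytilde, Ytilde, neg_div, Real.cosh_neg, Real.sinh_neg]; ring)]
  simp only [sech_sq_s13, Ytilde_eq, mul_assoc]
  rw [integral_const_mul]
  have hs : Real.sqrt (15 / 8) ^ 2 = 15 / 8 := Real.sq_sqrt (by norm_num)
  rw [mul_pow, mul_pow, hs]
  linarith
end
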